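/- Let P be a vector space partition of F_q^v of type d_l^{u_l}⋯d_2^{u_2}d_1^{u_1}, where u_1, u_2 > 0 and d_l > ⋯ > d_2 > d_1 ≥ 1, and suppose that d_2 − d_1 = a·d_1 + b for integers a ≥ 1 and 0 < b < d_1 (in particular d_1 does not divide d_2 − d_1). Then u_1 ≥ (q^{(a+2)d_1}−1)/(q^{d_1}−1). -/

import Mathlib

/-!
Write `K = q ^ k` and `R = q ^ (a * k + 1)`, and let `n` be the number of members of the smallest
dimension `k`, all other members having dimension at least `k + (a * k + 1)`. Counting the solutions
of `f x = 1` member by member shows that, for every linear functional `f`, the number `α f` of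
`k`-dimensional members in `ker f` is congruent to `n` modulo `R`. Let `s = n % R`. Since `α f - s`
is a multiple of `R`, the product `(α f - s) * (α f - s - R)` is never negative. Averaging it over
all `f`, with the first two moments of `α` known by double counting, gives
`t * (R * K - t) ≤ n * (K - 1)` for `t = n - s * K ≥ 0`. Together with `t ≡ (n / R) * q` modulo
`K - 1`, this leaves no `n` below the bound.
-/

open Module Finset

section Arithmetic

variable {A B C K R m n s t : ℤ}

lemma lt_mul_of_mul_sub_le (hB : 2 ≤ B) (hBR : B ≤ R) (hm : 1 ≤ m) (hmK : m * B ≤ K)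
    (htm : t ≤ m * R) (hvar : t * (R * K - t) ≤ m * R * K - t) : t < m * B := by
  by_contra! hmt
  have htop : t ≤ R * K + 1 - m * B := by
    have h₁ : 2 * (m * R) ≤ B * (m * R) := by gcongr; nlinarith
    have h₂ : R * (m * B) ≤ R * K := by gcongr; linarith
    linarith
  -- The concave function `x ↦ x * (R * K + 1 - x)` is symmetric about the midpoint of
  -- `[m * B, R * K + 1 - m * B]`, so on that interval it is smallest at the ends.
  have hend : m * B * (R * K + 1 - m * B) ≤ m * (R * K) := by
    nlinarith [mul_nonneg (sub_nonneg.2 hmt) (sub_nonneg.2 htop)]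
  have hcancel : B * (R * K + 1 - m * B) ≤ R * K :=
    le_of_mul_le_mul_left (by linarith) (by linarith : 0 < m)
  have hK : 0 ≤ K := by nlinarith
  have h₁ : B * K ≤ R * K := by gcongr
  have h₂ : 2 * (R * K) ≤ B * (R * K) := by gcongr; nlinarith
  have h₃ : B * (m * B) ≤ B * K := by gcongr
  linarith

lemma mul_sq_le_of_lt (hA : 0 ≤ A) (hB : 2 ≤ B) (hC : 1 ≤ C) (hm : C < m)
    (hn : m * (A * B) ≤ n) : A * (B * C) ^ 2 ≤ n * (B * C - 1) := by
  have hK : 2 ≤ B * C := by nlinarith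
  have hslack : 0 ≤ (B - 1) * (B * C - 1) - 1 := by nlinarith
  calc A * (B * C) ^ 2
      ≤ A * (B * C) ^ 2 + A * ((B - 1) * (B * C - 1) - 1) :=
        le_add_of_nonneg_right (mul_nonneg hA hslack)
    _ = (C + 1) * (A * B) * (B * C - 1) := by ring
    _ ≤ m * (A * B) * (B * C - 1) := by gcongr <;> nlinarith
    _ ≤ n * (B * C - 1) := by gcongr; linarith

lemma mul_sq_sub_one_le_of_le (hA : 1 ≤ A) (hB : 2 ≤ B) (hm : 1 ≤ m) (hmC : m ≤ C) (hs : 0 ≤ s)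
    (hdvd : B * C - 1 ∣ A - 1) (hn : n = m * (A * B) + s) (ht : t = n - s * (B * C)) (ht₀ : 0 ≤ t)
    (hvar : t * (A * B * (B * C) - t) ≤ n * (B * C - 1)) :
    A * (B * C) ^ 2 - 1 ≤ n * (B * C - 1) := by
  have hn' : n * (B * C - 1) = m * (A * B) * (B * C) - t := by rw [ht, hn]; ring
  have hK : 2 ≤ B * C := by nlinarith
  have hmK : m * B ≤ B * C := by nlinarith
  have htm : t ≤ m * (A * B) := by nlinarith
  have hlt : t < m * B :=
    lt_mul_of_mul_sub_le hB (by nlinarith) hm hmK htm (hvar.trans_eq hn')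
  have hcong : B * C - 1 ∣ m * B - t := by
    have : m * B - t = (B * C - 1) * s - m * B * (A - 1) := by rw [ht, hn]; ring
    exact this ▸ dvd_sub (dvd_mul_right _ _) (hdvd.mul_left _)
  have hgap : B * C - 1 ≤ m * B - t := Int.le_of_dvd (by linarith) hcong
  obtain rfl : m = C := by
    refine hmC.antisymm ?_
    by_contra! hm_lt
    nlinarith
  rw [hn']
  linarith

/-- The elementary argument behind the bound: `A`, `B`, `B * C` stand for `q ^ (a * k)`, `q`,
`q ^ k`, and `m`, `s` for quotient and remainder of `n` modulo `A * B`. -/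
theorem mul_sq_sub_one_le (hA : 1 ≤ A) (hB : 2 ≤ B) (hC : 1 ≤ C) (hdvd : B * C - 1 ∣ A - 1)
    (hn₀ : 0 < n) (hm : 0 ≤ m) (hs : 0 ≤ s) (hn : n = m * (A * B) + s)
    (ht : t = n - s * (B * C)) (ht₀ : 0 ≤ t)
    (hvar : t * (A * B * (B * C) - t) ≤ n * (B * C - 1)) :
    A * (B * C) ^ 2 - 1 ≤ n * (B * C - 1) := by
  rcases hm.eq_or_lt with rfl | hm
  · have : t = -(n * (B * C - 1)) := by rw [ht, hn]; ring
    nlinarith [mul_pos hn₀ (by nlinarith : 0 < B * C - 1)]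
  rcases le_or_gt m C with hmC | hmC
  · exact mul_sq_sub_one_le_of_le hA hB hm hmC hs hdvd hn ht ht₀ hvar
  · have hle : m * (A * B) ≤ n := by linarith
    linarith [mul_sq_le_of_lt (by linarith) hB hC hmC hle]

theorem geom_sum_le_of_mul_sub_le {q k a n : ℕ} (hq : 2 ≤ q) (hk : 1 ≤ k) (hn₀ : 0 < n)
    (ht : t = n - (n % q ^ (a * k + 1) : ℕ) * q ^ k) (ht₀ : 0 ≤ t)
    (hvar : t * ((q ^ (a * k + 1) : ℕ) * q ^ k - t) ≤ n * (q ^ k - 1)) :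
    ∑ i ∈ range (a + 2), (q ^ k) ^ i ≤ n := by
  have hq₁ : (1 : ℤ) ≤ q := mod_cast one_le_two.trans hq
  have hqk : (q : ℤ) * q ^ (k - 1) = q ^ k := by rw [← pow_succ', Nat.sub_add_cancel hk]
  have hR : ((q ^ (a * k + 1) : ℕ) : ℤ) = ((q : ℤ) ^ k) ^ a * q := by
    rw [Nat.cast_pow, pow_succ, mul_comm a, pow_mul]
  have hn : (n : ℤ) = (n / q ^ (a * k + 1) : ℕ) * (((q : ℤ) ^ k) ^ a * q) +
      (n % q ^ (a * k + 1) : ℕ) := by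
    rw [← hR]
    exact_mod_cast (Nat.div_add_mod' _ _).symm
  have hdvd : (q : ℤ) ^ k - 1 ∣ (q ^ k) ^ a - 1 := by
    simpa only [one_pow] using sub_dvd_pow_sub_pow ((q : ℤ) ^ k) 1 a
  have hmain : ((q : ℤ) ^ k) ^ a * (q ^ k) ^ 2 - 1 ≤ n * (q ^ k - 1) := by
    rw [hR] at hvar
    rw [← hqk] at hdvd ht hvar ⊢
    exact mul_sq_sub_one_le (one_le_pow₀ (hqk ▸ one_le_pow₀ hq₁)) (mod_cast hq) (one_le_pow₀ hq₁)
      hdvd (mod_cast hn₀) (Int.natCast_nonneg _) (Int.natCast_nonneg _) (hqk ▸ hn) ht ht₀ hvar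
  have hK : (1 : ℤ) < (q : ℤ) ^ k := one_lt_pow₀ (mod_cast hq) (by lia)
  have hgeom : (∑ i ∈ range (a + 2), ((q : ℤ) ^ k) ^ i) * (q ^ k - 1) ≤ n * (q ^ k - 1) := by
    rwa [geom_sum_mul, pow_add]
  exact_mod_cast le_of_mul_le_mul_right hgeom (sub_pos.2 hK)

lemma mul_sub_self_nonneg_of_dvd {x : ℤ} (h : R ∣ x) : 0 ≤ x * (x - R) := by
  obtain ⟨c, rfl⟩ := h
  have hc : 0 ≤ c * (c - 1) := by
    rcases le_or_gt c 0 with hc | hc <;> nlinarith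
  calc 0 ≤ R ^ 2 * (c * (c - 1)) := by positivity
    _ = R * c * (R * c - R) := by ring

end Arithmetic

variable {F V : Type*} [Field F] [AddCommGroup V] [Module F V]

section Functionals

lemma inter_preimage_one_eq_empty {f : Dual F V} {U : Submodule F V} (hU : U ≤ LinearMap.ker f) :
    (U : Set V) ∩ f ⁻¹' {1} = ∅ := by
  ext x
  simp only [Set.mem_inter_iff, SetLike.mem_coe, Set.mem_preimage, Set.mem_singleton_iff,
    Set.mem_empty_iff_false, iff_false, not_and]
  intro hx h
  exact zero_ne_one ((hU hx).symm.trans h)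

variable [Module.Finite F V]

lemma ncard_preimage_one_mul_card {f : Dual F V} (hf : f ≠ 0) :
    (f ⁻¹' {1}).ncard * Nat.card F = Nat.card F ^ finrank F V := by
  have hker : (f ⁻¹' {1}).ncard = Nat.card (LinearMap.ker f) :=
    Nat.card_congr (AddMonoidHom.fiberEquivKerOfSurjective (f := f.toAddMonoidHom)
      (LinearMap.surjective hf) 1)
  rw [hker, natCard_eq_pow_finrank (K := F), ← pow_succ, Dual.finrank_ker_add_one_of_ne_zero hf]

lemma ncard_inter_preimage_one_mul_card {f : Dual F V} {U : Submodule F V}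
    (hU : ¬ U ≤ LinearMap.ker f) :
    ((U : Set V) ∩ f ⁻¹' {1}).ncard * Nat.card F = Nat.card F ^ finrank F U := by
  have hf : f.domRestrict U ≠ 0 := fun h => hU fun x hx => LinearMap.congr_fun h ⟨x, hx⟩
  rw [← ncard_preimage_one_mul_card hf, ← Set.ncard_image_of_injective _ Subtype.val_injective]
  congr 2
  exact (Subtype.image_preimage_coe _ _).symm

lemma card_dualAnnihilator_mul (U : Submodule F V) :
    Nat.card U.dualAnnihilator * Nat.card F ^ finrank F U = Nat.card F ^ finrank F V := by
  rw [natCard_eq_pow_finrank (K := F), ← pow_add, add_comm,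
    Subspace.finrank_add_finrank_dualAnnihilator_eq]

lemma card_dual : Nat.card (Dual F V) = Nat.card F ^ finrank F V := by
  rw [natCard_eq_pow_finrank (K := F), Subspace.dual_finrank_eq]

lemma finrank_sup_of_disjoint {U W : Submodule F V} (h : Disjoint U W) :
    finrank F ↥(U ⊔ W) = finrank F U + finrank F W := by
  rw [← Submodule.finrank_sup_add_finrank_inf_eq, h.eq_bot, finrank_bot, add_zero]

end Functionals

section KerCount

open Classical in
/-- The number of members of `S` contained in the kernel of `f`. For `f ≠ 0` this counts the members
inside a hyperplane; working with functionals instead of hyperplanes counts each hyperplane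
`q - 1` times and adds the term `f = 0`. -/
noncomputable def kerCount (S : Finset (Submodule F V)) (f : Dual F V) : ℕ :=
  #{U ∈ S | U ≤ LinearMap.ker f}

/-- A family `S` of subspaces is `Δ`-divisible if every hyperplane contains `#S` members modulo `Δ`.
The functional `f = 0` imposes no further condition. -/
def IsDivisibleFamily (Δ : ℕ) (S : Finset (Submodule F V)) : Prop :=
  ∀ f : Dual F V, kerCount S f ≡ #S [MOD Δ]

variable {S : Finset (Submodule F V)} {k Δ : ℕ}

open Classical in
lemma sum_card_le_ker [Fintype (Dual F V)] {ι : Type*} (T : Finset ι) (g : ι → Submodule F V) :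
    ∑ f : Dual F V, #{i ∈ T | g i ≤ LinearMap.ker f} =
      ∑ i ∈ T, Nat.card (g i).dualAnnihilator := by
  refine (sum_card_bipartiteAbove_eq_sum_card_bipartiteBelow
    fun (f : Dual F V) i => g i ≤ LinearMap.ker f).trans (sum_congr rfl fun i _ => ?_)
  rw [bipartiteBelow, ← Fintype.card_subtype, ← Nat.card_eq_fintype_card]
  exact Nat.card_congr (Equiv.subtypeEquivRight fun f => (Submodule.mem_dualAnnihilator f).symm)

lemma sum_kerCount_mul [Fintype (Dual F V)] [Module.Finite F V]
    (hdim : ∀ U ∈ S, finrank F U = k) :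
    (∑ f, kerCount S f) * Nat.card F ^ k = #S * Nat.card F ^ finrank F V := by
  have hcount : ∑ f, kerCount S f = ∑ U ∈ S, Nat.card U.dualAnnihilator := sum_card_le_ker S id
  rw [hcount, sum_mul, ← smul_eq_mul #S, ← sum_const]
  exact sum_congr rfl fun U hU => hdim U hU ▸ card_dualAnnihilator_mul U

open Classical in
lemma kerCount_sq_eq_add_card_offDiag (f : Dual F V) :
    kerCount S f ^ 2 = kerCount S f + #{p ∈ S.offDiag | p.1 ⊔ p.2 ≤ LinearMap.ker f} := by
  have hoff : {p ∈ S.offDiag | p.1 ⊔ p.2 ≤ LinearMap.ker f} =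
      {U ∈ S | U ≤ LinearMap.ker f}.offDiag := by
    ext p
    simp only [mem_filter, mem_offDiag, sup_le_iff]
    tauto
  rw [hoff, offDiag_card, ← sq]
  exact (Nat.add_sub_cancel' (Nat.le_self_pow two_ne_zero _)).symm

lemma sum_kerCount_sq_mul [Fintype (Dual F V)] [Module.Finite F V]
    (hdim : ∀ U ∈ S, finrank F U = k) (hdisj : (S : Set (Submodule F V)).PairwiseDisjoint id) :
    (∑ f, kerCount S f ^ 2) * (Nat.card F ^ k) ^ 2 =
      (#S * Nat.card F ^ k + (#S * #S - #S)) * Nat.card F ^ finrank F V := by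
  classical
  have hpair : ∀ p ∈ S.offDiag, Nat.card (p.1 ⊔ p.2).dualAnnihilator * (Nat.card F ^ k) ^ 2 =
      Nat.card F ^ finrank F V := by
    intro p hp
    obtain ⟨h₁, h₂, hne⟩ := mem_offDiag.1 hp
    have hsup : finrank F ↥(p.1 ⊔ p.2) = k * 2 := by
      have h : Disjoint p.1 p.2 := hdisj h₁ h₂ hne
      rw [finrank_sup_of_disjoint h, hdim _ h₁, hdim _ h₂, mul_two]
    rw [← card_dualAnnihilator_mul (p.1 ⊔ p.2), hsup, pow_mul]
  have hoff : (∑ p ∈ S.offDiag, Nat.card (p.1 ⊔ p.2).dualAnnihilator) * (Nat.card F ^ k) ^ 2 =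
      (#S * #S - #S) * Nat.card F ^ finrank F V := by
    rw [sum_mul, sum_congr rfl hpair, sum_const, smul_eq_mul, offDiag_card]
  simp only [kerCount_sq_eq_add_card_offDiag, sum_add_distrib]
  rw [sum_card_le_ker S.offDiag fun p => p.1 ⊔ p.2, add_mul, hoff, sq, ← mul_assoc,
    sum_kerCount_mul hdim]
  ring

lemma sum_kerCount_sub_mul_sub [Fintype (Dual F V)] [Module.Finite F V]
    (hdim : ∀ U ∈ S, finrank F U = k) (hdisj : (S : Set (Submodule F V)).PairwiseDisjoint id)
    {K R s t : ℤ} (hK : K = Nat.card F ^ k) (ht : t = #S - s * K) :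
    (∑ f, ((kerCount S f : ℤ) - s) * (kerCount S f - s - R)) * K ^ 2 =
      (#S * (K - 1) - t * (R * K - t)) * (Nat.card F : ℤ) ^ finrank F V := by
  have hcard : ∑ _f : Dual F V, (1 : ℤ) = (Nat.card F : ℤ) ^ finrank F V := by
    rw [sum_const, nsmul_one, card_univ, ← Nat.card_eq_fintype_card, card_dual, Nat.cast_pow]
  have hmean : (∑ f, (kerCount S f : ℤ)) * K = #S * (Nat.card F : ℤ) ^ finrank F V := by
    rw [hK]
    exact_mod_cast sum_kerCount_mul hdim
  have hsq : (∑ f, (kerCount S f : ℤ) ^ 2) * K ^ 2 =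
      (#S * K + (#S * #S - #S)) * (Nat.card F : ℤ) ^ finrank F V := by
    have h := sum_kerCount_sq_mul hdim hdisj
    zify [Nat.le_mul_self] at h
    rwa [hK]
  have hexpand : ∑ f, ((kerCount S f : ℤ) - s) * (kerCount S f - s - R) =
      ∑ f, (kerCount S f : ℤ) ^ 2 - (2 * s + R) * ∑ f, (kerCount S f : ℤ) +
        s * (s + R) * ∑ _f : Dual F V, 1 := by
    rw [mul_sum, mul_sum, ← sum_sub_distrib, ← sum_add_distrib]
    exact sum_congr rfl fun f _ => by ring
  rw [hexpand, hcard, ht]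
  linear_combination hsq - (2 * s + R) * K * hmean

end KerCount

section DivisibleFamily

variable {S : Finset (Submodule F V)} {k Δ : ℕ}

lemma IsDivisibleFamily.mod_le_kerCount (hdiv : IsDivisibleFamily Δ S) (f : Dual F V) :
    #S % Δ ≤ kerCount S f :=
  hdiv f ▸ Nat.mod_le _ _

variable [Finite F] [Module.Finite F V]

lemma IsDivisibleFamily.mod_mul_le_card (hdiv : IsDivisibleFamily Δ S)
    (hdim : ∀ U ∈ S, finrank F U = k) : #S % Δ * Nat.card F ^ k ≤ #S := by
  have := finite_of_finite F (M := Dual F V)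
  have := Fintype.ofFinite (Dual F V)
  refine Nat.le_of_mul_le_mul_right (c := Nat.card F ^ finrank F V) ?_ (pow_pos Nat.card_pos _)
  calc #S % Δ * Nat.card F ^ k * Nat.card F ^ finrank F V
      = (∑ _f : Dual F V, #S % Δ) * Nat.card F ^ k := by
        rw [sum_const, smul_eq_mul, card_univ, ← Nat.card_eq_fintype_card, card_dual]; ring
    _ ≤ (∑ f, kerCount S f) * Nat.card F ^ k := by
        gcongr with f; exact hdiv.mod_le_kerCount f
    _ = #S * Nat.card F ^ finrank F V := sum_kerCount_mul hdim

lemma IsDivisibleFamily.mul_sub_le (hdiv : IsDivisibleFamily Δ S)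
    (hdim : ∀ U ∈ S, finrank F U = k) (hdisj : (S : Set (Submodule F V)).PairwiseDisjoint id)
    {K t : ℤ} (hK : K = Nat.card F ^ k) (ht : t = #S - (#S % Δ : ℕ) * K) :
    t * (Δ * K - t) ≤ #S * (K - 1) := by
  have := finite_of_finite F (M := Dual F V)
  have := Fintype.ofFinite (Dual F V)
  have hterm (f : Dual F V) : 0 ≤ ((kerCount S f : ℤ) - (#S % Δ : ℕ)) *
      (kerCount S f - (#S % Δ : ℕ) - Δ) := by
    have hmod : ((#S % Δ : ℕ) : ℤ) ≡ kerCount S f [ZMOD Δ] :=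
      Int.natCast_modEq_iff.2 ((Nat.mod_modEq _ _).trans (hdiv f).symm)
    exact mul_sub_self_nonneg_of_dvd hmod.dvd
  have hnonneg : 0 ≤ (#S * (K - 1) - t * (Δ * K - t)) * (Nat.card F : ℤ) ^ finrank F V :=
    sum_kerCount_sub_mul_sub hdim hdisj hK ht ▸
      mul_nonneg (sum_nonneg fun f _ => hterm f) (sq_nonneg K)
  exact sub_nonneg.1 (nonneg_of_mul_nonneg_left hnonneg (pow_pos (mod_cast Nat.card_pos) _))

/-- The left-hand side is the size of a `k`-spread of a space of dimension `(a + 2) * k`. -/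
theorem IsDivisibleFamily.geom_sum_le_card {a : ℕ}
    (hdiv : IsDivisibleFamily (Nat.card F ^ (a * k + 1)) S) (hk : 1 ≤ k) (hS : S.Nonempty)
    (hdim : ∀ U ∈ S, finrank F U = k) (hdisj : (S : Set (Submodule F V)).PairwiseDisjoint id) :
    ∑ i ∈ range (a + 2), (Nat.card F ^ k) ^ i ≤ #S := by
  have hle : #S % Nat.card F ^ (a * k + 1) * Nat.card F ^ k ≤ #S := hdiv.mod_mul_le_card hdim
  exact geom_sum_le_of_mul_sub_le Finite.one_lt_card hk hS.card_pos rfl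
    (sub_nonneg.2 (mod_cast hle)) (hdiv.mul_sub_le hdim hdisj rfl rfl)

end DivisibleFamily

section Partition

/-- The members of `P` of dimension `k`; for the smallest occurring dimension this is the tail of a
vector space partition. -/
noncomputable def membersOfFinrank (P : Finset (Submodule F V)) (k : ℕ) :
    Finset (Submodule F V) :=
  {U ∈ P | finrank F U = k}

lemma mem_membersOfFinrank {P : Finset (Submodule F V)} {k : ℕ} {U : Submodule F V} :
    U ∈ membersOfFinrank P k ↔ U ∈ P ∧ finrank F U = k :=
  mem_filter

/-- `P` is a vector space partition: every nonzero vector lies in exactly one member. The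
zero subspace is allowed as a member. -/
def IsVectorSpacePartition (P : Finset (Submodule F V)) : Prop :=
  ∀ x : V, x ≠ 0 → ∃! U : Submodule F V, U ∈ P ∧ x ∈ U

namespace IsVectorSpacePartition

variable {P : Finset (Submodule F V)} {k r : ℕ}

lemma pairwiseDisjoint (hP : IsVectorSpacePartition P) :
    (P : Set (Submodule F V)).PairwiseDisjoint id := by
  intro U hU W hW hne
  rw [Function.onFun, Submodule.disjoint_def]
  intro x hxU hxW
  by_contra hx
  exact hne ((hP x hx).unique ⟨hU, hxU⟩ ⟨hW, hxW⟩)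

lemma sum_ncard_inter [Finite V] (hP : IsVectorSpacePartition P) {A : Set V} (hA : 0 ∉ A) :
    ∑ U ∈ P, ((U : Set V) ∩ A).ncard = A.ncard := by
  have hcover : ⋃ U ∈ P, (U : Set V) ∩ A = A := by
    refine (Set.iUnion₂_subset fun _ _ => Set.inter_subset_right).antisymm fun x hx => ?_
    obtain ⟨U, ⟨hU, hxU⟩, -⟩ := hP x (ne_of_mem_of_not_mem hx hA)
    exact Set.mem_biUnion hU ⟨hxU, hx⟩
  have hdisj : (P : Set (Submodule F V)).PairwiseDisjoint fun U => (U : Set V) ∩ A := by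
    intro U hU W hW hne
    refine Set.disjoint_left.2 fun x hxU hxW => ?_
    exact hA (Submodule.disjoint_def.1 (hP.pairwiseDisjoint hU hW hne) x hxU.1 hxW.1 ▸ hxU.2)
  rw [← finsum_mem_coe_finset, ← P.finite_toSet.ncard_biUnion (fun _ _ => Set.toFinite _) hdisj]
  exact congrArg Set.ncard hcover

open Classical in
lemma sum_pow_finrank_of_not_le_ker [Finite F] [Module.Finite F V] (hP : IsVectorSpacePartition P)
    {f : Dual F V} (hf : f ≠ 0) :
    ∑ U ∈ P with ¬ U ≤ LinearMap.ker f, Nat.card F ^ finrank F U = Nat.card F ^ finrank F V := by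
  have := Module.finite_of_finite F (M := V)
  have h0 : (0 : V) ∉ f ⁻¹' {1} := by simp
  rw [← ncard_preimage_one_mul_card hf, ← hP.sum_ncard_inter h0, sum_mul, sum_filter]
  refine sum_congr rfl fun U _ => ?_
  split_ifs with hU
  · rw [inter_preimage_one_eq_empty hU, Set.ncard_empty, zero_mul]
  · rw [ncard_inter_preimage_one_mul_card hU]

open Classical in
lemma pow_dvd_card_not_le_ker [Finite F] [Module.Finite F V] (hP : IsVectorSpacePartition P)
    (hdim : ∀ U ∈ P, finrank F U = k ∨ k + r ≤ finrank F U) (hV : k + r ≤ finrank F V)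
    {f : Dual F V} (hf : f ≠ 0) :
    Nat.card F ^ r ∣ #{U ∈ membersOfFinrank P k | ¬ U ≤ LinearMap.ker f} := by
  set q := Nat.card F
  set S := membersOfFinrank P k
  set L : Finset (Submodule F V) := {U ∈ P | finrank F U ≠ k}
  have hsmall : ∑ U ∈ S with ¬ U ≤ LinearMap.ker f, q ^ finrank F U =
      #{U ∈ S | ¬ U ≤ LinearMap.ker f} * q ^ k := by
    rw [← smul_eq_mul, ← sum_const]
    exact sum_congr rfl fun U hU => by rw [(mem_membersOfFinrank.1 (mem_filter.1 hU).1).2]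
  have hlarge : q ^ (k + r) ∣ ∑ U ∈ L with ¬ U ≤ LinearMap.ker f, q ^ finrank F U := by
    refine dvd_sum fun U hU => pow_dvd_pow _ ?_
    obtain ⟨hUP, hne⟩ := mem_filter.1 (mem_filter.1 hU).1
    exact (hdim U hUP).resolve_left hne
  have hsplit : #{U ∈ S | ¬ U ≤ LinearMap.ker f} * q ^ k +
      ∑ U ∈ L with ¬ U ≤ LinearMap.ker f, q ^ finrank F U = q ^ finrank F V := by
    rw [← hsmall, ← hP.sum_pow_finrank_of_not_le_ker hf]
    simp only [sum_filter (p := fun U : Submodule F V => ¬ U ≤ LinearMap.ker f)]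
    exact sum_filter_add_sum_filter_not P (finrank F · = k) _
  have hdvd : q ^ (k + r) ∣ #{U ∈ S | ¬ U ≤ LinearMap.ker f} * q ^ k :=
    (Nat.dvd_add_left hlarge).1 (hsplit ▸ pow_dvd_pow _ hV)
  rw [add_comm, pow_add] at hdvd
  exact Nat.dvd_of_mul_dvd_mul_right (pow_pos Nat.card_pos _) hdvd

theorem isDivisibleFamily [Finite F] [Module.Finite F V] (hP : IsVectorSpacePartition P)
    (hdim : ∀ U ∈ P, finrank F U = k ∨ k + r ≤ finrank F U) (hV : k + r ≤ finrank F V) :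
    IsDivisibleFamily (Nat.card F ^ r) (membersOfFinrank P k) := by
  classical
  intro f
  rcases eq_or_ne f 0 with rfl | hf
  · simp [kerCount, Nat.ModEq.refl]
  have hcount : kerCount (membersOfFinrank P k) f +
      #{U ∈ membersOfFinrank P k | ¬ U ≤ LinearMap.ker f} = #(membersOfFinrank P k) :=
    card_filter_add_card_filter_not _
  rw [← hcount, Nat.modEq_iff_dvd' (Nat.le_add_right _ _), Nat.add_sub_cancel_left]
  convert hP.pow_dvd_card_not_le_ker hdim hV hf

end IsVectorSpacePartition

end Partition

lemma apply_eq_zero_or_one_le {α : Type*} [Preorder α] {l : ℕ} (hl : 2 ≤ l) {d : Fin l → α}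
    (hd : Monotone d) (i : Fin l) : d i = d ⟨0, by omega⟩ ∨ d ⟨1, by omega⟩ ≤ d i := by
  rcases Nat.eq_zero_or_pos i with hi | hi
  · exact Or.inl (congrArg d (Fin.ext hi))
  · exact Or.inr (hd hi)

theorem improved_tail_bound_general [Finite F] [Module.Finite F V] {P : Finset (Submodule F V)}
    (hP : IsVectorSpacePartition P) {k a : ℕ} (hk : 1 ≤ k)
    (hdim : ∀ U ∈ P, finrank F U = k ∨ (a + 1) * k < finrank F U)
    (hV : (a + 1) * k < finrank F V) (hne : 0 < #(membersOfFinrank P k)) :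
    (Nat.card F ^ ((a + 2) * k) - 1) / (Nat.card F ^ k - 1) ≤ #(membersOfFinrank P k) := by
  have hr : k + (a * k + 1) = (a + 1) * k + 1 := by ring
  have hdiv := hP.isDivisibleFamily (k := k) (r := a * k + 1) (by rwa [hr]) (by rwa [hr])
  have hK : 2 ≤ Nat.card F ^ k := Finite.one_lt_card.trans_le (Nat.le_self_pow (by lia) _)
  rw [mul_comm, pow_mul, ← Nat.geomSum_eq hK]
  exact hdiv.geom_sum_le_card hk (card_pos.1 hne) (fun U hU => (mem_membersOfFinrank.1 hU).2)
    (hP.pairwiseDisjoint.subset (coe_subset.2 (filter_subset _ _)))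

/-- Improved bound: if `d_2 - d_1 = a·d_1 + b` with `a ≥ 1` and `0 < b < d_1`, then
`u_1 ≥ (q^{(a+2)d_1}-1)/(q^{d_1}-1)`. Here `d 0 = d_1`, `d 1 = d_2`. -/
theorem improved_tail_bound
    {F : Type} [Field F] [Fintype F] (q v l : ℕ)
    (hq : q = Fintype.card F) (hl : 2 ≤ l)
    (d u : Fin l → ℕ) (hd : StrictMono d) (hd1 : 1 ≤ d ⟨0, by omega⟩)
    (hu1 : 0 < u ⟨0, by omega⟩) (hu2 : 0 < u ⟨1, by omega⟩)
    (P : Finset (Submodule F (Fin v → F)))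
    (hpart : ∀ x : Fin v → F, x ≠ 0 →
      ∃! U : Submodule F (Fin v → F), U ∈ P ∧ x ∈ U)
    (htype : ∀ U ∈ P, ∃ i : Fin l, Module.finrank F ↥U = d i)
    (hcount : ∀ i : Fin l, u i = Set.ncard
      {U : Submodule F (Fin v → F) | U ∈ P ∧ Module.finrank F ↥U = d i})
    (a b : ℕ) (ha : 1 ≤ a) (hb0 : 0 < b) (hbd : b < d ⟨0, by omega⟩)
    (hab : d ⟨1, by omega⟩ - d ⟨0, by omega⟩ = a * d ⟨0, by omega⟩ + b) :
    (q ^ ((a + 2) * d ⟨0, by omega⟩) - 1) / (q ^ d ⟨0, by omega⟩ - 1) ≤ u ⟨0, by omega⟩ := by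
  have hcard (i : Fin l) : u i = #(membersOfFinrank P (d i)) := by
    rw [hcount, ← Set.ncard_coe_finset, membersOfFinrank, coe_filter]
  have hlt : (a + 1) * d ⟨0, by omega⟩ < d ⟨1, by omega⟩ := by lia
  obtain ⟨W, hW⟩ := card_pos.1 (hcard ⟨1, by omega⟩ ▸ hu2)
  have hV : d ⟨1, by omega⟩ ≤ finrank F (Fin v → F) :=
    (mem_membersOfFinrank.1 hW).2 ▸ W.finrank_le
  have hdim : ∀ U ∈ P, finrank F U = d ⟨0, by omega⟩ ∨ d ⟨1, by omega⟩ ≤ finrank F U := by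
    intro U hU
    obtain ⟨i, hi⟩ := htype U hU
    exact hi ▸ apply_eq_zero_or_one_le hl hd.monotone i
  rw [hq, ← Nat.card_eq_fintype_card, hcard]
  exact improved_tail_bound_general hpart hd1 (fun U hU => (hdim U hU).imp_right hlt.trans_le)
    (hlt.trans_le hV) (hcard _ ▸ hu1)
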